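/- Define the 57 vectors in ℝ^3: 1=(0,0,1), 2=(1,-1,0), 3=(1,1,0), 4=(0,1,0), 5=(1,0,-1), 6=(1,0,1), 7=(1,0,0), 8=(0,1,1), 9=(0,1,-1), A=(√2,-1,0), B=(1,√2,0), C=(√2,1,0), D=(1,-√2,0), E=(√2,0,-1), F=(1,0,√2), G=(√2,0,1), H=(1,0,-√2), I=(0,√2,1), J=(0,1,-√2), K=(0,√2,-1), L=(0,1,√2), M=(√2,1,-1), N=(√2,-1,1), O=(-√2,1,1), P=(√2,1,1), Q=(1,√2,1), R=(1,-√2,1), S=(-1,√2,1), T=(1,√2,-1), U=(1,1,√2), V=(1,1,-√2), W=(-1,1,√2), X=(1,-1,√2), Y=(-1,-√2,3), Z=(1,√2,3), a=(-√2,1,3), b=(√2,-1,3), c=(-1,√2,3), d=(1,-√2,3), e=(√2,1,3), f=(-√2,-1,3), g=(-1,3,-√2), h=(3,-1,-√2), i=(-1,3,√2), j=(3,-1,√2), k=(1,3,-√2), l=(3,1,√2), m=(1,3,√2), n=(3,1,-√2), o=(-√2,3,1), p=(√2,3,-1), q=(√2,3,1), r=(-√2,3,-1), s=(3,-√2,-1),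 t=(3,√2,-1), u=(3,√2,1), v=(3,-√2,1). There is no function f from these 57 vectors to {0,1} such that (i) no two of the vectors that are orthogonal (with respect to the standard inner product on ℝ^3) are both assigned 1, and (ii) each of the 40 triples 123, 147, 456, 5QR, 6ST, 789, 8MN, 9OP, ATZ, 1AB, BNa, BOb, 1CD, CRc, CSd, DMe, DPf, 4EF, FMo, FOp, 4GH, HNq, HPr, 7IJ, JSu, 7KL, LRt, LTv, AQY, JQs, EUg, KUh, 2UV, GVi, IVj, GWk, KWl, 3WX, EXm, IXn contains at least one vector assigned 1. That is, the Peres 57-vector set is a Kochen-Specker set in ℝ^3. -/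

import Mathlib

def dot3 (u v : Fin 3 → ℝ) : ℝ := ∑ i, u i * v i

noncomputable def v1 : Fin 3 → ℝ := ![0, 0, 1]
noncomputable def v2 : Fin 3 → ℝ := ![1, (-1), 0]
noncomputable def v3 : Fin 3 → ℝ := ![1, 1, 0]
noncomputable def v4 : Fin 3 → ℝ := ![0, 1, 0]
noncomputable def v5 : Fin 3 → ℝ := ![1, 0, (-1)]
noncomputable def v6 : Fin 3 → ℝ := ![1, 0, 1]
noncomputable def v7 : Fin 3 → ℝ := ![1, 0, 0]
noncomputable def v8 : Fin 3 → ℝ := ![0, 1, 1]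
noncomputable def v9 : Fin 3 → ℝ := ![0, 1, (-1)]
noncomputable def vA : Fin 3 → ℝ := ![Real.sqrt 2, (-1), 0]
noncomputable def vB : Fin 3 → ℝ := ![1, Real.sqrt 2, 0]
noncomputable def vC : Fin 3 → ℝ := ![Real.sqrt 2, 1, 0]
noncomputable def vD : Fin 3 → ℝ := ![1, (-Real.sqrt 2), 0]
noncomputable def vE : Fin 3 → ℝ := ![Real.sqrt 2, 0, (-1)]
noncomputable def vF : Fin 3 → ℝ := ![1, 0, Real.sqrt 2]
noncomputable def vG : Fin 3 → ℝ := ![Real.sqrt 2, 0, 1]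
noncomputable def vH : Fin 3 → ℝ := ![1, 0, (-Real.sqrt 2)]
noncomputable def vI : Fin 3 → ℝ := ![0, Real.sqrt 2, 1]
noncomputable def vJ : Fin 3 → ℝ := ![0, 1, (-Real.sqrt 2)]
noncomputable def vK : Fin 3 → ℝ := ![0, Real.sqrt 2, (-1)]
noncomputable def vL : Fin 3 → ℝ := ![0, 1, Real.sqrt 2]
noncomputable def vM : Fin 3 → ℝ := ![Real.sqrt 2, 1, (-1)]
noncomputable def vN : Fin 3 → ℝ := ![Real.sqrt 2, (-1), 1]
noncomputable def vO : Fin 3 → ℝ := ![(-Real.sqrt 2), 1, 1]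
noncomputable def vP : Fin 3 → ℝ := ![Real.sqrt 2, 1, 1]
noncomputable def vQ : Fin 3 → ℝ := ![1, Real.sqrt 2, 1]
noncomputable def vR : Fin 3 → ℝ := ![1, (-Real.sqrt 2), 1]
noncomputable def vS : Fin 3 → ℝ := ![(-1), Real.sqrt 2, 1]
noncomputable def vT : Fin 3 → ℝ := ![1, Real.sqrt 2, (-1)]
noncomputable def vU : Fin 3 → ℝ := ![1, 1, Real.sqrt 2]
noncomputable def vV : Fin 3 → ℝ := ![1, 1, (-Real.sqrt 2)]
noncomputable def vW : Fin 3 → ℝ := ![(-1), 1, Real.sqrt 2]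
noncomputable def vX : Fin 3 → ℝ := ![1, (-1), Real.sqrt 2]
noncomputable def vY : Fin 3 → ℝ := ![(-1), (-Real.sqrt 2), 3]
noncomputable def vZ : Fin 3 → ℝ := ![1, Real.sqrt 2, 3]
noncomputable def va : Fin 3 → ℝ := ![(-Real.sqrt 2), 1, 3]
noncomputable def vb : Fin 3 → ℝ := ![Real.sqrt 2, (-1), 3]
noncomputable def vc : Fin 3 → ℝ := ![(-1), Real.sqrt 2, 3]
noncomputable def vd : Fin 3 → ℝ := ![1, (-Real.sqrt 2), 3]
noncomputable def ve : Fin 3 → ℝ := ![Real.sqrt 2, 1, 3]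
noncomputable def vf : Fin 3 → ℝ := ![(-Real.sqrt 2), (-1), 3]
noncomputable def vg : Fin 3 → ℝ := ![(-1), 3, (-Real.sqrt 2)]
noncomputable def vh : Fin 3 → ℝ := ![3, (-1), (-Real.sqrt 2)]
noncomputable def vi : Fin 3 → ℝ := ![(-1), 3, Real.sqrt 2]
noncomputable def vj : Fin 3 → ℝ := ![3, (-1), Real.sqrt 2]
noncomputable def vk : Fin 3 → ℝ := ![1, 3, (-Real.sqrt 2)]
noncomputable def vl : Fin 3 → ℝ := ![3, 1, Real.sqrt 2]
noncomputable def vm : Fin 3 → ℝ := ![1, 3, Real.sqrt 2]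
noncomputable def vn : Fin 3 → ℝ := ![3, 1, (-Real.sqrt 2)]
noncomputable def vo : Fin 3 → ℝ := ![(-Real.sqrt 2), 3, 1]
noncomputable def vp : Fin 3 → ℝ := ![Real.sqrt 2, 3, (-1)]
noncomputable def vq : Fin 3 → ℝ := ![Real.sqrt 2, 3, 1]
noncomputable def vr : Fin 3 → ℝ := ![(-Real.sqrt 2), 3, (-1)]
noncomputable def vs : Fin 3 → ℝ := ![3, (-Real.sqrt 2), (-1)]
noncomputable def vt : Fin 3 → ℝ := ![3, Real.sqrt 2, (-1)]
noncomputable def vu : Fin 3 → ℝ := ![3, Real.sqrt 2, 1]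
noncomputable def vv : Fin 3 → ℝ := ![3, (-Real.sqrt 2), 1]

noncomputable def allVecs : List (Fin 3 → ℝ) :=
  [v1, v2, v3, v4, v5, v6, v7, v8, v9, vA, vB, vC, vD, vE, vF, vG, vH, vI, vJ, vK, vL, vM, vN, vO, vP, vQ, vR, vS, vT, vU, vV, vW, vX, vY, vZ, va, vb, vc, vd, ve, vf, vg, vh, vi, vj, vk, vl, vm, vn, vo, vp, vq, vr, vs, vt, vu, vv]

noncomputable def tuples : List (List (Fin 3 → ℝ)) :=
  [[v1, v2, v3],
   [v1, v4, v7],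
   [v4, v5, v6],
   [v5, vQ, vR],
   [v6, vS, vT],
   [v7, v8, v9],
   [v8, vM, vN],
   [v9, vO, vP],
   [vA, vT, vZ],
   [v1, vA, vB],
   [vB, vN, va],
   [vB, vO, vb],
   [v1, vC, vD],
   [vC, vR, vc],
   [vC, vS, vd],
   [vD, vM, ve],
   [vD, vP, vf],
   [v4, vE, vF],
   [vF, vM, vo],
   [vF, vO, vp],
   [v4, vG, vH],
   [vH, vN, vq],
   [vH, vP, vr],
   [v7, vI, vJ],
   [vJ, vS, vu],
   [v7, vK, vL],
   [vL, vR, vt],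
   [vL, vT, vv],
   [vA, vQ, vY],
   [vJ, vQ, vs],
   [vE, vU, vg],
   [vK, vU, vh],
   [v2, vU, vV],
   [vG, vV, vi],
   [vI, vV, vj],
   [vG, vW, vk],
   [vK, vW, vl],
   [v3, vW, vX],
   [vE, vX, vm],
   [vI, vX, vn]]

theorem ks_dot3_self_pos : ∀ u ∈ allVecs, 0 < dot3 u u := by
  have h2 : Real.sqrt 2 * Real.sqrt 2 = 2 := Real.mul_self_sqrt (by norm_num)
  simp only [allVecs, List.forall_mem_cons, List.not_mem_nil, false_imp_iff, implies_true, and_true]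
  refine ⟨?_, ?_, ?_, ?_, ?_, ?_, ?_, ?_, ?_, ?_, ?_, ?_, ?_, ?_, ?_, ?_, ?_, ?_, ?_, ?_, ?_, ?_, ?_, ?_, ?_, ?_, ?_, ?_, ?_, ?_, ?_, ?_, ?_, ?_, ?_, ?_, ?_, ?_, ?_, ?_, ?_, ?_, ?_, ?_, ?_, ?_, ?_, ?_, ?_, ?_, ?_, ?_, ?_, ?_, ?_, ?_, ?_⟩ <;>
  simp [dot3, Fin.sum_univ_three, v1, v2, v3, v4, v5, v6, v7, v8, v9, vA, vB, vC, vD, vE, vF, vG, vH, vI, vJ, vK, vL, vM, vN, vO, vP, vQ, vR, vS, vT, vU, vV, vW, vX, vY, vZ, va, vb, vc, vd, ve, vf, vg, vh, vi, vj, vk, vl, vm, vn, vo, vp, vq, vr, vs, vt, vu, vv] <;> norm_num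

/-- Each listed triple is pairwise orthogonal. -/
theorem ks_tuples_orth : ∀ t ∈ tuples, t.Pairwise (fun u v => dot3 u v = 0) := by
  have h2 : Real.sqrt 2 * Real.sqrt 2 = 2 := Real.mul_self_sqrt (by norm_num)
  simp only [tuples, List.forall_mem_cons, List.not_mem_nil, false_imp_iff, implies_true, and_true]
  refine ⟨?_, ?_, ?_, ?_, ?_, ?_, ?_, ?_, ?_, ?_, ?_, ?_, ?_, ?_, ?_, ?_, ?_, ?_, ?_, ?_, ?_, ?_, ?_, ?_, ?_, ?_, ?_, ?_, ?_, ?_, ?_, ?_, ?_, ?_, ?_, ?_, ?_, ?_, ?_, ?_⟩ <;>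
  · simp only [List.pairwise_cons, List.forall_mem_cons, List.not_mem_nil, false_imp_iff,
      implies_true, and_true, List.Pairwise.nil]
    refine ⟨⟨?_, ?_⟩, ?_⟩ <;>
    simp [dot3, Fin.sum_univ_three, v1, v2, v3, v4, v5, v6, v7, v8, v9, vA, vB, vC, vD, vE, vF, vG, vH, vI, vJ, vK, vL, vM, vN, vO, vP, vQ, vR, vS, vT, vU, vV, vW, vX, vY, vZ, va, vb, vc, vd, ve, vf, vg, vh, vi, vj, vk, vl, vm, vn, vo, vp, vq, vr, vs, vt, vu, vv] <;> norm_num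

theorem ks_tuples_mem : ∀ t ∈ tuples, ∀ u ∈ t, u ∈ allVecs := by
  simp only [tuples, List.forall_mem_cons, List.not_mem_nil, false_imp_iff, implies_true, and_true]
  simp [allVecs]

/-- In each listed triple exactly one vector gets the value one. -/
theorem ks_exactly_one (f : (Fin 3 → ℝ) → Bool)
    (h : ∀ u ∈ allVecs, ∀ v ∈ allVecs, u ≠ v → dot3 u v = 0 → ¬ (f u = true ∧ f v = true))
    (h' : ∀ t ∈ tuples, ∃ v ∈ t, f v = true) (a b c : Fin 3 → ℝ) (ht : [a, b, c] ∈ tuples) :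
    (f a = true ∨ f b = true ∨ f c = true) ∧ ¬ (f a = true ∧ f b = true) ∧
      ¬ (f a = true ∧ f c = true) ∧ ¬ (f b = true ∧ f c = true) := by
  have hm := ks_tuples_mem _ ht
  have ho := ks_tuples_orth _ ht
  have he := h' _ ht
  have key : ∀ u ∈ allVecs, ∀ v ∈ allVecs, dot3 u v = 0 → ¬ (f u = true ∧ f v = true) := by
    intro u hu v hv huv
    refine h u hu v hv ?_ huv
    rintro rfl
    exact (ks_dot3_self_pos u hu).ne' huv
  have ha := hm a (by simp)
  have hb := hm b (by simp)
  have hc := hm c (by simp)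
  simp only [List.pairwise_cons, List.forall_mem_cons, List.not_mem_nil, false_imp_iff,
      implies_true, and_true, List.Pairwise.nil] at ho
  refine ⟨by simpa using he, key a ha b hb ho.1.1, key a ha c hc ho.1.2, key b hb c hc ho.2⟩

theorem peres57_vector_KS :
    ¬ ∃ f : (Fin 3 → ℝ) → Bool,
      (∀ u ∈ allVecs, ∀ v ∈ allVecs, u ≠ v → dot3 u v = 0 →
        ¬ (f u = true ∧ f v = true)) ∧
      (∀ t ∈ tuples, ∃ v ∈ t, f v = true) := by
  rintro ⟨f, h, h'⟩
  have E := ks_exactly_one f h h'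
  have e0 := E v1 v2 v3 (by simp [tuples])
  have e1 := E v1 v4 v7 (by simp [tuples])
  have e2 := E v4 v5 v6 (by simp [tuples])
  have e3 := E v5 vQ vR (by simp [tuples])
  have e4 := E v6 vS vT (by simp [tuples])
  have e5 := E v7 v8 v9 (by simp [tuples])
  have e6 := E v8 vM vN (by simp [tuples])
  have e7 := E v9 vO vP (by simp [tuples])
  have e8 := E vA vT vZ (by simp [tuples])
  have e9 := E v1 vA vB (by simp [tuples])
  have e10 := E vB vN va (by simp [tuples])
  have e11 := E vB vO vb (by simp [tuples])
  have e12 := E v1 vC vD (by simp [tuples])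
  have e13 := E vC vR vc (by simp [tuples])
  have e14 := E vC vS vd (by simp [tuples])
  have e15 := E vD vM ve (by simp [tuples])
  have e16 := E vD vP vf (by simp [tuples])
  have e17 := E v4 vE vF (by simp [tuples])
  have e18 := E vF vM vo (by simp [tuples])
  have e19 := E vF vO vp (by simp [tuples])
  have e20 := E v4 vG vH (by simp [tuples])
  have e21 := E vH vN vq (by simp [tuples])
  have e22 := E vH vP vr (by simp [tuples])
  have e23 := E v7 vI vJ (by simp [tuples])
  have e24 := E vJ vS vu (by simp [tuples])
  have e25 := E v7 vK vL (by simp [tuples])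
  have e26 := E vL vR vt (by simp [tuples])
  have e27 := E vL vT vv (by simp [tuples])
  have e28 := E vA vQ vY (by simp [tuples])
  have e29 := E vJ vQ vs (by simp [tuples])
  have e30 := E vE vU vg (by simp [tuples])
  have e31 := E vK vU vh (by simp [tuples])
  have e32 := E v2 vU vV (by simp [tuples])
  have e33 := E vG vV vi (by simp [tuples])
  have e34 := E vI vV vj (by simp [tuples])
  have e35 := E vG vW vk (by simp [tuples])
  have e36 := E vK vW vl (by simp [tuples])
  have e37 := E v3 vW vX (by simp [tuples])
  have e38 := E vE vX vm (by simp [tuples])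
  have e39 := E vI vX vn (by simp [tuples])
  clear E h h'
  generalize f v1 = x1 at *
  generalize f v2 = x2 at *
  generalize f v3 = x3 at *
  generalize f v4 = x4 at *
  generalize f v5 = x5 at *
  generalize f v6 = x6 at *
  generalize f v7 = x7 at *
  generalize f v8 = x8 at *
  generalize f v9 = x9 at *
  generalize f vA = xA at *
  generalize f vB = xB at *
  generalize f vC = xC at *
  generalize f vD = xD at *
  generalize f vE = xE at *
  generalize f vF = xF at *
  generalize f vG = xG at *
  generalize f vH = xH at *
  generalize f vI = xI at *
  generalize f vJ = xJ at *
  generalize f vK = xK at *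
  generalize f vL = xL at *
  generalize f vM = xM at *
  generalize f vN = xN at *
  generalize f vO = xO at *
  generalize f vP = xP at *
  generalize f vQ = xQ at *
  generalize f vR = xR at *
  generalize f vS = xS at *
  generalize f vT = xT at *
  generalize f vU = xU at *
  generalize f vV = xV at *
  generalize f vW = xW at *
  generalize f vX = xX at *
  generalize f vY = xY at *
  generalize f vZ = xZ at *
  generalize f va = xa at *
  generalize f vb = xb at *
  generalize f vc = xc at *
  generalize f vd = xd at *
  generalize f ve = xe at *
  generalize f vf = xf at *
  generalize f vg = xg at *
  generalize f vh = xh at *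
  generalize f vi = xi at *
  generalize f vj = xj at *
  generalize f vk = xk at *
  generalize f vl = xl at *
  generalize f vm = xm at *
  generalize f vn = xn at *
  generalize f vo = xo at *
  generalize f vp = xp at *
  generalize f vq = xq at *
  generalize f vr = xr at *
  generalize f vs = xs at *
  generalize f vt = xt at *
  generalize f vu = xu at *
  generalize f vv = xv at *
  rcases e1.1 with h | h | h
  · rcases e30.1 with g | g | g
    · grind
    · rcases e2.1 with k | k | k <;> grind
    · grind
  · rcases e8.1 with g | g | g
    · grind
    · rcases e0.1 with k | k | k <;> grind
    · grind
  · rcases e10.1 with g | g | g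
    · grind
    · rcases e0.1 with k | k | k <;> grind
    · grind
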